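/- For natural numbers K, m, c with 1 ≤ m, m < K, 2 ≤ c, and c ≤ K, the ratio of binomial coefficients satisfies C(K - m, c) / C(K, c) < ((K - m)/K)^c as real numbers. -/

import Mathlib

theorem choose_aux (a K c : ℕ) (ha : 1 ≤ a) (haK : a < K) (hc2 : 2 ≤ c) :
    c ≤ K → a.choose c * K ^ c < a ^ c * K.choose c := by
  have key : ∀ d, 1 ≤ d → d < K → (a - d) * K < a * (K - d) := by
    intro d hd hdK
    obtain ⟨e, rfl⟩ := Nat.exists_eq_add_of_lt hdK
    rcases Nat.le_total a d with h | h
    · rw [Nat.sub_eq_zero_of_le h, zero_mul]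
      exact Nat.mul_pos (by omega) (by omega)
    · obtain ⟨f, rfl⟩ := Nat.exists_eq_add_of_le h
      have h1 : d + f - d = f := by omega
      have h2 : d + e + 1 - d = e + 1 := by omega
      rw [h1, h2]
      have : f < e + 1 := by omega
      nlinarith
  have step : ∀ d, a.choose (d+1) * K ^ (d+1) * (d+1) = (a.choose d * K ^ d) * ((a - d) * K) := by
    intro d
    have := Nat.choose_succ_right_eq a d
    calc _ = (a.choose (d+1) * (d+1)) * K ^ (d+1) := by ring
      _ = _ := by rw [this]; ring
  have step2 : ∀ d, a ^ (d+1) * K.choose (d+1) * (d+1) = (a ^ d * K.choose d) * (a * (K - d)) := by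
    intro d
    have := Nat.choose_succ_right_eq K d
    calc _ = (K.choose (d+1) * (d+1)) * a ^ (d+1) := by ring
      _ = _ := by rw [this]; ring
  induction c, hc2 using Nat.le_induction with
  | base =>
    intro h
    apply Nat.lt_of_mul_lt_mul_right (a := 1 + 1)
    rw [step 1, step2 1]
    simp only [Nat.choose_one_right, pow_one]
    exact Nat.mul_lt_mul_of_pos_left (key 1 le_rfl (by omega)) (Nat.mul_pos (by omega) (by omega))
  | succ d hd ih =>
    intro h
    apply Nat.lt_of_mul_lt_mul_right (a := d + 1)
    rw [step d, step2 d]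
    exact Nat.mul_lt_mul'' (ih (by omega)) (key d (by omega) (by omega))

theorem choose_ratio_lt_pow (K m c : ℕ) (hm : 1 ≤ m) (hmK : m < K)
    (hc2 : 2 ≤ c) (hcK : c ≤ K) :
    (((K - m).choose c : ℝ)) / ((K.choose c : ℝ)) <
      (((K - m : ℕ) : ℝ) / (K : ℝ)) ^ c := by
  have h := choose_aux (K - m) K c (by omega) (by omega) hc2 hcK
  have hK : 0 < (K : ℝ) := by exact_mod_cast (by omega : 0 < K)
  have hC : 0 < (K.choose c : ℝ) := by exact_mod_cast Nat.choose_pos hcK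
  rw [div_pow, div_lt_div_iff₀ hC (pow_pos hK c)]
  exact_mod_cast h
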